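/- Let N ≥ 1, t ∈ ℂ with t ≠ 0, and let λ ∈ ℂ satisfy λ² = 4(N+1)² t. For x ∈ ℂ^{N+1} with sin(x_i − x_j) ≠ 0 for all i ≠ j, define (N+1)×(N+1) matrices F_1(x),…,F_{N+1}(x) with entries (F_i(x))_{pq} = 2 + 2t Σ_{α∈A_N⁺} (α_i α_p + α_i α_q + α_p α_q) + λ t Σ_{α∈A_N⁺} α_i α_p α_q cot α(x), where α_i = α(e_i). Then for all i, j, k ∈ {1,…,N+1} and every such x at which F_j(x) is invertible, one has F_i(x) F_j(x)^{-1} F_k(x) = F_k(x) F_j(x)^{-1} F_i(x). -/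

import Mathlib

open Finset

noncomputable section

/-- Complex cotangent. -/
def ccot (z : ℂ) : ℂ := Complex.cos z / Complex.sin z

/-- The standard covector `e^i`. -/
def esgl (N : ℕ) (i : Fin N) : Fin N → ℂ := Pi.single i 1

/-- The covector `e^i - e^j` of `A_N⁺` attached to a pair `(i, j)`, `i < j`. -/
def aroot (N : ℕ) (p : Fin (N + 1) × Fin (N + 1)) : Fin (N + 1) → ℂ :=
  esgl (N + 1) p.1 - esgl (N + 1) p.2

/-- The matrix `F_i(x)` of third derivatives of the `A_N` prepotential with
`y = Σ xᵢ`:  `(F_i)_{pq} = 2 + 2t Σ_{α}(αᵢαₚ + αᵢα_q + αₚα_q) + λt Σ_α αᵢαₚα_q cot α(x)`. -/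
def FmatA (N : ℕ) (t lam : ℂ) (i : Fin (N + 1)) (x : Fin (N + 1) → ℂ) :
    Matrix (Fin (N + 1)) (Fin (N + 1)) ℂ :=
  Matrix.of fun p q =>
    2 + 2 * t * (∑ pr ∈ Finset.univ.filter
        (fun pr : Fin (N + 1) × Fin (N + 1) => pr.1 < pr.2),
      (aroot N pr i * aroot N pr p + aroot N pr i * aroot N pr q +
        aroot N pr p * aroot N pr q)) +
    lam * t * ∑ pr ∈ Finset.univ.filter
        (fun pr : Fin (N + 1) × Fin (N + 1) => pr.1 < pr.2),
      aroot N pr i * aroot N pr p * aroot N pr q * ccot (x pr.1 - x pr.2)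

/-!
Write `n = N + 1`, `𝟙 = (1, …, 1)` and `v_i = ∑ r, (e_i - e_r) = n e_i - 𝟙`. Only the roots
`±(e_i - e_r)` contribute to the sums defining `F_i`, and one finds
`F_i = 2 G + 2 t (v_i 𝟙ᵀ + 𝟙 v_iᵀ) + λ t T_i`, where `G = (1 - t) 𝟙𝟙ᵀ + n t I` and
`T_i = ∑ r, cot (x_i - x_r) (e_i - e_r)(e_i - e_r)ᵀ`. Since `v_i` and the image of `T_i` are
orthogonal to `𝟙`, this factors as `n F_i = G M_i` with
`M_i = 2 n I + 2 v_i 𝟙ᵀ + 2 t 𝟙 v_iᵀ + λ T_i`, and the WDVV equations follow once the `M_i` commute.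
In the commutator `[M_i, M_k]` the mixed terms drop out because `T_i v_k = T_k v_i`. The addition
formula for the cotangent gives `λ² [T_i, T_k] = -λ² ∑ r, (e_i - e_r) ∧ (e_k - e_r)`, the rank-one
terms contribute `4 t n v_i ∧ v_k = 4 t n² ∑ r, (e_i - e_r) ∧ (e_k - e_r)`, and the two cancel
because `λ² = 4 n² t`.
-/

open Matrix

lemma mul_inv_mul_comm_of_commute {ι R : Type*} [Fintype ι] [DecidableEq ι] [CommRing R]
    {G X Y Z : Matrix ι ι R} (hXY : Commute X Y) (hXZ : Commute X Z) (hYZ : Commute Y Z)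
    (h : IsUnit (G * Y)) :
    G * X * (G * Y)⁻¹ * (G * Z) = G * Z * (G * Y)⁻¹ * (G * X) := by
  have hdet : IsUnit (G.det * Y.det) := by simpa using (isUnit_iff_isUnit_det _).mp h
  have hG : G⁻¹ * G = 1 := nonsing_inv_mul G (isUnit_of_mul_isUnit_left hdet)
  obtain ⟨u, rfl⟩ := (isUnit_iff_isUnit_det Y).mpr (isUnit_of_mul_isUnit_right hdet)
  have cancel (A B : Matrix ι ι R) :
      G * A * (G * (u : Matrix ι ι R))⁻¹ * (G * B) = G * (A * (↑u⁻¹ : Matrix ι ι R) * B) := by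
    rw [Matrix.mul_inv_rev, coe_units_inv]
    simp only [Matrix.mul_assoc, ← Matrix.mul_assoc G⁻¹ G, hG, Matrix.one_mul]
  have hswap : X * (↑u⁻¹ : Matrix ι ι R) * Z = Z * (↑u⁻¹ : Matrix ι ι R) * X :=
    calc X * (↑u⁻¹ : Matrix ι ι R) * Z
        = X * Z * (↑u⁻¹ : Matrix ι ι R) := by
          rw [Matrix.mul_assoc, hYZ.units_inv_left.eq, Matrix.mul_assoc]
      _ = Z * (↑u⁻¹ : Matrix ι ι R) * X := by
          rw [hXZ.eq, Matrix.mul_assoc, hXY.units_inv_right.eq, Matrix.mul_assoc]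
  rw [cancel, cancel, hswap]

section RootVectors

variable {ι R : Type*} [DecidableEq ι] [CommRing R]

/-- The root `e_i - e_j` of type `A`. -/
def rootVec (i j : ι) : ι → R := Pi.single i 1 - Pi.single j 1

lemma rootVec_apply (i j p : ι) :
    (rootVec i j : ι → R) p = (if p = i then 1 else 0) - if p = j then 1 else 0 := by
  simp [rootVec, Pi.single_apply]

lemma rootVec_self (i : ι) : (rootVec i i : ι → R) = 0 := sub_self _

lemma rootVec_swap (i j : ι) : (rootVec j i : ι → R) = -rootVec i j := (neg_sub _ _).symm

lemma rootVec_sub_rootVec (i j k : ι) : (rootVec i k - rootVec j k : ι → R) = rootVec i j :=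
  sub_sub_sub_cancel_right _ _ _

/-- The wedge product of two vectors, as a skew-symmetric matrix. -/
def wedge (u v : ι → R) : Matrix ι ι R := vecMulVec u v - vecMulVec v u

variable [Fintype ι]

lemma rootVec_dotProduct_rootVec (i j k l : ι) :
    (rootVec i j ⬝ᵥ rootVec k l : R) =
      ((if i = k then 1 else 0) - if i = l then 1 else 0) -
        ((if j = k then 1 else 0) - if j = l then 1 else 0) := by
  simp [rootVec, Pi.single_apply, eq_comm, sub_sub_sub_comm]

/-- The sum of the roots `e_i - e_r`, that is, `n` times the orthogonal projection of `e_i` to the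
hyperplane spanned by the roots. It is also `∑ α, α_i • α` over the positive roots `α`. -/
def rootSum (i : ι) : ι → R := ∑ r, rootVec i r

lemma rootSum_eq (i : ι) : (rootSum i : ι → R) = (Fintype.card ι : R) • Pi.single i 1 - 1 := by
  ext p
  simp [rootSum, rootVec, Pi.single_apply]

lemma rootSum_apply (i p : ι) :
    (rootSum i : ι → R) p = Fintype.card ι * (if p = i then 1 else 0) - 1 := by
  simp [rootSum_eq, Pi.single_apply]

lemma one_dotProduct_rootVec (i j : ι) : (1 ⬝ᵥ rootVec i j : R) = 0 := by
  simp [rootVec]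

lemma one_dotProduct_rootSum (i : ι) : (1 ⬝ᵥ rootSum i : R) = 0 := by
  simp [rootSum, dotProduct_sum, one_dotProduct_rootVec]

lemma wedge_rootSum (i k : ι) :
    wedge (rootSum i) (rootSum k) =
      (Fintype.card ι : R) • ∑ r, wedge (rootVec i r : ι → R) (rootVec k r) := by
  ext p q
  have expand (r : ι) : wedge (rootVec i r : ι → R) (rootVec k r) p q =
      wedge (Pi.single i 1) (Pi.single k 1) p q
        - (Pi.single i 1 - Pi.single k 1 : ι → R) p * (if q = r then 1 else 0)
        + (Pi.single i 1 - Pi.single k 1 : ι → R) q * (if p = r then 1 else 0) := by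
    simp only [wedge, rootVec, Pi.sub_apply, Matrix.sub_apply, vecMulVec_apply, Pi.single_apply]
    ring
  simp only [Matrix.smul_apply, Matrix.sum_apply, expand, sum_add_distrib, sum_sub_distrib,
    ← mul_sum, sum_ite_eq, mem_univ, if_true, sum_const, card_univ, nsmul_eq_mul, smul_eq_mul]
  simp only [wedge, rootSum_eq, Matrix.sub_apply, vecMulVec_apply, Pi.sub_apply, Pi.smul_apply,
    Pi.one_apply, smul_eq_mul]
  ring

end RootVectors

section StarLaplacian

variable {ι R : Type*} [Fintype ι] [DecidableEq ι] [CommRing R] (C : ι → ι → R)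

/-- The Laplacian of the star graph with centre `i` and edge weights `C i r`. For
`C i r = cot (x i - x r)` it is the cubic term `∑ α, α_i cot α(x) • α αᵀ` of the third
derivatives of the prepotential. -/
def starLaplacian (i : ι) : Matrix ι ι R :=
  ∑ r, C i r • vecMulVec (rootVec i r) (rootVec i r)

lemma starLaplacian_mulVec (i : ι) (v : ι → R) :
    starLaplacian C i *ᵥ v = ∑ r, (C i r * (rootVec i r ⬝ᵥ v)) • rootVec i r := by
  simp [starLaplacian, sum_mulVec, smul_mulVec, vecMulVec_mulVec, mul_smul]

lemma starLaplacian_transpose (i : ι) : (starLaplacian C i)ᵀ = starLaplacian C i := by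
  simp [starLaplacian, transpose_sum]

lemma vecMul_starLaplacian (i : ι) (v : ι → R) :
    v ᵥ* starLaplacian C i = starLaplacian C i *ᵥ v := by
  rw [← mulVec_transpose, starLaplacian_transpose]

lemma starLaplacian_mulVec_one (i : ι) : starLaplacian C i *ᵥ 1 = 0 := by
  simp [starLaplacian_mulVec, dotProduct_comm _ 1, one_dotProduct_rootVec]

lemma starLaplacian_mulVec_single {i k : ι} (hik : i ≠ k) :
    starLaplacian C i *ᵥ Pi.single k 1 = -C i k • rootVec i k := by
  rw [starLaplacian_mulVec]
  simp [rootVec_apply, hik.symm, sum_ite_eq, ite_smul]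

lemma starLaplacian_mul_starLaplacian {i k : ι} (hik : i ≠ k) :
    starLaplacian C i * starLaplacian C k =
      ∑ r, ((C i r * C k r) • vecMulVec (rootVec i r) (rootVec k r)
        - (C i r * C k i) • vecMulVec (rootVec i r) (rootVec k i)
        - (C i k * C k r) • vecMulVec (rootVec i k) (rootVec k r)) := by
  let W (r s : ι) : Matrix ι ι R := (C i r * C k s) • vecMulVec (rootVec i r) (rootVec k s)
  have collapse (r s : ι) : C i r • vecMulVec (rootVec i r) (rootVec i r) *
      C k s • vecMulVec (rootVec k s) (rootVec k s) =
      (if r = s then W r s else 0) - (if i = s then W r s else 0)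
        - if r = k then W r s else 0 := by
    rw [Matrix.smul_mul, Matrix.mul_smul, vecMulVec_mul_vecMulVec, rootVec_dotProduct_rootVec,
      if_neg hik, vecMulVec_smul, smul_smul, smul_comm]
    simp only [sub_smul, ite_smul, one_smul, zero_smul, W]
    abel
  have center : ∑ r, ∑ s, (if r = k then W r s else 0) = ∑ s, W k s := by
    rw [sum_comm]
    simp only [sum_ite_eq', mem_univ, if_true]
  simp only [starLaplacian, sum_mul_sum, collapse, sum_sub_distrib, center, sum_ite_eq, mem_univ,
    if_true, W]

variable {C}

lemma starLaplacian_mulVec_rootSum_comm (hC : ∀ a b, C a b = -C b a) (i k : ι) :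
    starLaplacian C i *ᵥ rootSum k = starLaplacian C k *ᵥ rootSum i := by
  rcases eq_or_ne i k with rfl | hik
  · rfl
  · simp only [rootSum_eq, mulVec_sub, mulVec_smul, starLaplacian_mulVec_one,
      starLaplacian_mulVec_single C hik, starLaplacian_mulVec_single C hik.symm, hC k i,
      rootVec_swap i k, neg_smul, smul_neg, neg_neg]

theorem starLaplacian_mul_sub_mul_swap {κ : R} (hC : ∀ a b, C a b = -C b a)
    (hcot : ∀ a b c, a ≠ b → b ≠ c → c ≠ a →
      C a b * C b c + C b c * C c a + C c a * C a b = κ) {i k : ι} (hik : i ≠ k) :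
    starLaplacian C i * starLaplacian C k - starLaplacian C k * starLaplacian C i =
      -κ • ∑ r, wedge (rootVec i r : ι → R) (rootVec k r) := by
  rw [starLaplacian_mul_starLaplacian C hik, starLaplacian_mul_starLaplacian C hik.symm,
    ← sum_sub_distrib, smul_sum]
  refine sum_congr rfl fun r _ => ?_
  have hcoeff : wedge (rootVec i r : ι → R) (rootVec k r) = 0 ∨
      C i r * C k r - C i k * C k r + C i k * C i r = -κ := by
    by_cases hir : i = r
    · left; simp [wedge, hir, rootVec_self]
    by_cases hkr : k = r
    · left; simp [wedge, hkr, rootVec_self]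
    right
    have h := hcot i k r hik hkr (Ne.symm hir)
    rw [hC r i] at h
    linear_combination -h
  have hwedge : (C i r * C k r) • vecMulVec (rootVec i r) (rootVec k r)
        - (C i r * C k i) • vecMulVec (rootVec i r) (rootVec k i)
        - (C i k * C k r) • vecMulVec (rootVec i k) (rootVec k r)
        - ((C k r * C i r) • vecMulVec (rootVec k r) (rootVec i r)
          - (C k r * C i k) • vecMulVec (rootVec k r) (rootVec i k)
          - (C k i * C i r) • vecMulVec (rootVec k i) (rootVec i r)) =
      (C i r * C k r - C i k * C k r + C i k * C i r) •
        wedge (rootVec i r : ι → R) (rootVec k r) := by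
    rw [hC k i, ← rootVec_sub_rootVec i k r, ← rootVec_sub_rootVec k i r]
    simp only [wedge, sub_vecMulVec, vecMulVec_sub]
    module
  rw [hwedge]
  rcases hcoeff with h | h <;> simp only [h, smul_zero]

end StarLaplacian

section Prepotential

variable {R : Type*} [CommRing R]

/-- Up to the factor `2 n`, the metric `∑ i, F_i` of the Frobenius structure. -/
def prepotentialMetric (ι : Type*) [Fintype ι] [DecidableEq ι] (t : R) : Matrix ι ι R :=
  (1 - t) • vecMulVec 1 1 + (Fintype.card ι * t) • 1

variable {ι : Type*} [Fintype ι] [DecidableEq ι] (t lam : R) (C : ι → ι → R)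

/-- The matrix `F_i` of third derivatives of the prepotential, with an arbitrary function `C i j`
in place of `cot (x i - x j)` and the sums over the positive roots carried out. -/
def prepotentialMatrix (i : ι) : Matrix ι ι R :=
  (2 : R) • prepotentialMetric ι t + (2 * t) • (vecMulVec (rootSum i) 1 + vecMulVec 1 (rootSum i))
    + (lam * t) • starLaplacian C i

/-- Up to the factor `2 n ^ 2`, the matrix `(∑ j, F_j)⁻¹ F_i` of multiplication by the `i`-th
coordinate vector field in the Frobenius algebra defined by the prepotential. -/
def multiplicationMatrix (i : ι) : Matrix ι ι R :=
  (2 * Fintype.card ι : R) • 1 + (2 : R) • vecMulVec (rootSum i) 1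
    + (2 * t) • vecMulVec 1 (rootSum i) + lam • starLaplacian C i

lemma prepotentialMetric_mul_multiplicationMatrix (i : ι) :
    prepotentialMetric ι t * multiplicationMatrix t lam C i =
      (Fintype.card ι : R) • prepotentialMatrix t lam C i := by
  simp only [prepotentialMatrix, prepotentialMetric, multiplicationMatrix, add_mul, mul_add,
    Matrix.smul_mul, Matrix.mul_smul, Matrix.mul_one, Matrix.one_mul, vecMulVec_mul,
    vecMul_vecMulVec, one_dotProduct_rootSum, one_dotProduct_one, vecMul_starLaplacian,
    starLaplacian_mulVec_one, zero_smul, vecMulVec_zero, vecMulVec_smul]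
  module

variable {t lam C}

theorem commute_multiplicationMatrix {κ : R} (hC : ∀ a b, C a b = -C b a)
    (hcot : ∀ a b c, a ≠ b → b ≠ c → c ≠ a →
      C a b * C b c + C b c * C c a + C c a * C a b = κ)
    (hlam : κ * lam ^ 2 = 4 * (Fintype.card ι : R) ^ 2 * t) (i k : ι) :
    Commute (multiplicationMatrix t lam C i) (multiplicationMatrix t lam C k) := by
  rcases eq_or_ne i k with rfl | hik
  · exact Commute.refl _
  have hT := starLaplacian_mul_sub_mul_swap hC hcot hik
  have hv := wedge_rootSum (R := R) i k
  rw [wedge] at hv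
  rw [commute_iff_eq]
  simp only [multiplicationMatrix, add_mul, mul_add, Matrix.smul_mul, Matrix.mul_smul,
    Matrix.mul_one, Matrix.one_mul, vecMulVec_mul, vecMul_vecMulVec,
    mul_vecMulVec (starLaplacian C _), one_dotProduct_rootSum, dotProduct_comm _ 1,
    one_dotProduct_one, vecMul_starLaplacian,
    starLaplacian_mulVec_one, zero_smul, vecMulVec_zero, zero_vecMulVec, vecMulVec_smul,
    dotProduct_comm (rootSum k) (rootSum i), starLaplacian_mulVec_rootSum_comm hC k i]
  linear_combination (norm := module) (4 * t * Fintype.card ι : R) • hv + lam ^ 2 • hT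
    - hlam • ∑ r, wedge (rootVec i r : ι → R) (rootVec k r)

end Prepotential

/-- With `C a b = f (x a - x b)`, the value `κ = 1` is the case `f = cot` and `κ = -1` the case
`f = coth`. -/
theorem AN_satisfies_WDVV_general {ι R : Type*} [Fintype ι] [DecidableEq ι] [CommRing R]
    (hcard : IsUnit (Fintype.card ι : R)) {t lam κ : R} {C : ι → ι → R}
    (hC : ∀ a b, C a b = -C b a)
    (hcot : ∀ a b c, a ≠ b → b ≠ c → c ≠ a →
      C a b * C b c + C b c * C c a + C c a * C a b = κ)
    (hlam : κ * lam ^ 2 = 4 * (Fintype.card ι : R) ^ 2 * t) (i j k : ι)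
    (hj : IsUnit (prepotentialMatrix t lam C j)) :
    prepotentialMatrix t lam C i * (prepotentialMatrix t lam C j)⁻¹ * prepotentialMatrix t lam C k =
      prepotentialMatrix t lam C k * (prepotentialMatrix t lam C j)⁻¹ *
        prepotentialMatrix t lam C i := by
  obtain ⟨n, hn⟩ := hcard
  have factor (l : ι) : prepotentialMatrix t lam C l =
      prepotentialMetric ι t * (n⁻¹ • multiplicationMatrix t lam C l) := by
    rw [Matrix.mul_smul, prepotentialMetric_mul_multiplicationMatrix, ← hn, ← Units.smul_def,
      inv_smul_smul]
  have hcomm (l m : ι) : Commute (n⁻¹ • multiplicationMatrix t lam C l)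
      (n⁻¹ • multiplicationMatrix t lam C m) :=
    ((commute_multiplicationMatrix hC hcot hlam l m).smul_left _).smul_right _
  rw [factor j] at hj
  rw [factor i, factor j, factor k]
  exact mul_inv_mul_comm_of_commute (hcomm i j) (hcomm i k) (hcomm j k) hj

section PositiveRoots

variable {ι R : Type*} [Fintype ι] [LinearOrder ι] [CommRing R]

lemma sum_lt_rootVec_mul (h : ι → ι → R) (h_swap : ∀ a b, h a b = -h b a)
    (h_self : ∀ a, h a a = 0) (i : ι) :
    ∑ p : ι × ι with p.1 < p.2, rootVec p.1 p.2 i * h p.1 p.2 = ∑ r, h i r := by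
  have trichotomy (r : ι) :
      h i r = (if i < r then h i r else 0) - if r < i then h r i else 0 := by
    rcases lt_trichotomy i r with hr | rfl | hr
    · simp [hr, hr.not_gt]
    · simp [h_self]
    · simp [hr, hr.not_gt, h_swap i r]
  have expand (a b : ι) : (if a < b then rootVec a b i * h a b else 0) =
      (if i = a then if a < b then h a b else 0 else 0)
        - if i = b then if a < b then h a b else 0 else 0 := by
    rw [rootVec_apply]
    split_ifs <;> ring
  rw [sum_filter, Fintype.sum_prod_type]
  simp only [expand, sum_sub_distrib, sum_ite_eq, mem_univ, if_true]
  rw [sum_comm]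
  simp only [sum_ite_eq, mem_univ, if_true]
  rw [← sum_sub_distrib]
  exact sum_congr rfl fun r _ => (trichotomy r).symm

lemma sum_lt_rootVec_mul_rootVec (i p : ι) :
    ∑ α : ι × ι with α.1 < α.2, (rootVec α.1 α.2 i * rootVec α.1 α.2 p : R) = rootSum i p := by
  rw [sum_lt_rootVec_mul (fun a b => rootVec a b p) (fun a b => by simp [rootVec_swap b a])
    (fun a => by simp [rootVec_self]), rootSum, Finset.sum_apply]

lemma sum_lt_rootVec_mul_rootVec_mul_rootVec (C : ι → ι → R) (hC : ∀ a b, C a b = -C b a)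
    (i p q : ι) :
    ∑ α : ι × ι with α.1 < α.2,
        rootVec α.1 α.2 i * rootVec α.1 α.2 p * rootVec α.1 α.2 q * C α.1 α.2 =
      starLaplacian C i p q := by
  simp only [mul_assoc]
  rw [sum_lt_rootVec_mul (fun a b => rootVec a b p * (rootVec a b q * C a b))
    (fun a b => by simp [rootVec_swap b a, hC a b]) (fun a => by simp [rootVec_self])]
  simp only [starLaplacian, Matrix.sum_apply, Matrix.smul_apply, vecMulVec_apply, smul_eq_mul]
  exact sum_congr rfl fun r _ => by ring

end PositiveRoots

lemma ccot_neg (z : ℂ) : ccot (-z) = -ccot z := by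
  rw [ccot, ccot, Complex.cos_neg, Complex.sin_neg, div_neg]

lemma ccot_sub_swap (z w : ℂ) : ccot (z - w) = -ccot (w - z) := by
  rw [← ccot_neg, neg_sub]

lemma ccot_mul_add_ccot_mul_add_ccot_mul {a b c : ℂ} (h : a + b + c = 0) (ha : Complex.sin a ≠ 0)
    (hb : Complex.sin b ≠ 0) (hc : Complex.sin c ≠ 0) :
    ccot a * ccot b + ccot b * ccot c + ccot c * ccot a = 1 := by
  obtain rfl : c = -(a + b) := by linear_combination h
  rw [Complex.sin_neg, neg_ne_zero] at hc
  simp only [ccot, Complex.sin_neg, Complex.cos_neg]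
  field_simp
  rw [Complex.sin_add, Complex.cos_add]
  ring

lemma FmatA_eq_prepotentialMatrix (N : ℕ) (t lam : ℂ) (i : Fin (N + 1)) (x : Fin (N + 1) → ℂ) :
    FmatA N t lam i x = prepotentialMatrix t lam (fun a b => ccot (x a - x b)) i := by
  have aroot_eq (α : Fin (N + 1) × Fin (N + 1)) : aroot N α = rootVec α.1 α.2 := rfl
  ext p q
  simp only [FmatA, aroot_eq, of_apply, sum_add_distrib, sum_lt_rootVec_mul_rootVec,
    sum_lt_rootVec_mul_rootVec_mul_rootVec _ fun a b => ccot_sub_swap (x a) (x b)]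
  simp only [prepotentialMatrix, prepotentialMetric, Matrix.add_apply, Matrix.smul_apply,
    vecMulVec_apply, one_apply, Pi.one_apply, rootSum_apply, Fintype.card_fin, smul_eq_mul]
  simp only [@eq_comm _ q p]
  ring

/-- the `A_N` prepotential with `y = Σ xᵢ` and `λ² = 4(N+1)²t`
satisfies the WDVV equations in the variables `x₁, …, x_{N+1}`. -/
theorem AN_satisfies_WDVV (N : ℕ) (hN : 1 ≤ N) (t lam : ℂ) (ht : t ≠ 0)
    (hlam : lam ^ 2 = 4 * ((N : ℂ) + 1) ^ 2 * t)
    (x : Fin (N + 1) → ℂ)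
    (hx : ∀ i j : Fin (N + 1), i ≠ j → Complex.sin (x i - x j) ≠ 0)
    (i j k : Fin (N + 1)) (hj : IsUnit (FmatA N t lam j x)) :
    FmatA N t lam i x * (FmatA N t lam j x)⁻¹ * FmatA N t lam k x =
      FmatA N t lam k x * (FmatA N t lam j x)⁻¹ * FmatA N t lam i x := by
  simp only [FmatA_eq_prepotentialMatrix] at hj ⊢
  exact AN_satisfies_WDVV_general (κ := 1) (by simp [Nat.cast_add_one_ne_zero])
    (fun a b => ccot_sub_swap (x a) (x b))
    (fun a b c hab hbc hca =>
      ccot_mul_add_ccot_mul_add_ccot_mul (by ring) (hx a b hab) (hx b c hbc) (hx c a hca))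
    (by simpa using hlam) i j k hj

end
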